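/- arXiv:2112.15154 — 6 statements merged into one kernel-verified Lean document; each statement's English description precedes it below -/
import Mathlib

section
/- For ε ∈ [0,1), let ψ(M) denote the unique real solution of Kepler's equation M = ψ − ε·sin ψ. Then for every integer n ≥ 1, ∫_0^π (ψ(M) − M)·sin(nM) dM = (π/n)·J_n(nε), where J_n(x) = (1/π)·∫_0^π cos(nθ − x·sin θ) dθ. -/
open Real MeasureTheory intervalIntegral

/-- Bessel function of the first kind of integer order,
`J_n(x) = (1/π) ∫_0^π cos(nθ - x sin θ) dθ`. -/
noncomputable def besselJ (n : ℕ) (x : ℝ) : ℝ :=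
  (1 / π) * ∫ θ in (0:ℝ)..π, Real.cos (n * θ - x * Real.sin θ)

/-- If `ψ M` is the (unique) real solution of Kepler's equation
`M = ψ - ε sin ψ` with `ε ∈ [0,1)`, then for every integer `n ≥ 1`,
`∫_0^π (ψ(M) - M) sin(nM) dM = (π/n) J_n(nε)`. -/
theorem kepler_fourier_coefficient (ε : ℝ) (hε : ε ∈ Set.Ico (0:ℝ) 1)
    (ψ : ℝ → ℝ) (hψ : ∀ M : ℝ, M = ψ M - ε * Real.sin (ψ M))
    (n : ℕ) (hn : 1 ≤ n) :
    ∫ M in (0:ℝ)..π, (ψ M - M) * Real.sin (n * M) = (π / n) * besselJ n (n * ε) := by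
  have h0 := hε.1
  have h1 := hε.2
  have hn0 : (n:ℝ) ≠ 0 := by positivity
  have hs : ∀ a b : ℝ, |Real.sin a - Real.sin b| ≤ |a - b| := fun a b => by
    have := Real.lipschitzWith_sin.dist_le_mul a b
    simpa [Real.dist_eq] using this
  have key : ∀ a b : ℝ, (1 - ε) * |a - b| ≤ |(a - ε * Real.sin a) - (b - ε * Real.sin b)| := by
    intro a b
    have h2 := abs_sub_abs_le_abs_sub (a - b) (ε * (Real.sin a - Real.sin b))
    rw [abs_mul, abs_of_nonneg h0] at h2
    have h3 := mul_le_mul_of_nonneg_left (hs a b) h0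
    have h4 : (a - ε * Real.sin a) - (b - ε * Real.sin b)
        = (a - b) - ε * (Real.sin a - Real.sin b) := by ring
    rw [h4]
    linarith
  have hinv : ∀ t : ℝ, ψ (t - ε * Real.sin t) = t := by
    intro t
    have h2 := key (ψ (t - ε * Real.sin t)) t
    rw [← hψ (t - ε * Real.sin t), sub_self, abs_zero] at h2
    have h3 : |ψ (t - ε * Real.sin t) - t| ≤ 0 := by
      by_contra h
      push Not at h
      nlinarith
    linarith [abs_nonpos_iff.mp h3]
  have hc : Continuous ψ := by
    have : LipschitzWith (Real.toNNReal (1 - ε)⁻¹) ψ := by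
      apply LipschitzWith.of_dist_le_mul
      intro a b
      have h2 := key (ψ a) (ψ b)
      rw [← hψ a, ← hψ b] at h2
      have h5 : 0 < 1 - ε := by linarith
      rw [Real.coe_toNNReal _ (by positivity), Real.dist_eq, Real.dist_eq, inv_mul_eq_div,
        le_div_iff₀ h5]
      linarith
    exact this.continuous
  have hf : ∀ t : ℝ, HasDerivAt (fun t => t - ε * Real.sin t) (1 - ε * Real.cos t) t :=
    fun t => (hasDerivAt_id t).sub ((Real.hasDerivAt_sin t).const_mul ε)
  have hsub := intervalIntegral.integral_comp_mul_deriv (a := 0) (b := π)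
    (f := fun t => t - ε * Real.sin t) (f' := fun t => 1 - ε * Real.cos t)
    (g := fun M => (ψ M - M) * Real.sin (n * M)) (fun t _ => hf t)
    (by fun_prop) (by fun_prop)
  simp only [Function.comp_def, hinv, Real.sin_zero, Real.sin_pi, mul_zero, sub_zero] at hsub
  rw [← hsub]
  have hG : ∀ t : ℝ, HasDerivAt (fun t => -(ε * Real.sin t * Real.cos (n * (t - ε * Real.sin t))) / n
      - Real.sin (n * (t - ε * Real.sin t)) / n ^ 2)
      ((t - (t - ε * Real.sin t)) * Real.sin (n * (t - ε * Real.sin t)) * (1 - ε * Real.cos t)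
        - Real.cos (n * t - n * ε * Real.sin t) / n) t := by
    intro t
    have a1 := (hf t).const_mul (n:ℝ)
    have a2 := (((((Real.hasDerivAt_sin t).const_mul ε).mul a1.cos).neg).div_const (n:ℝ)).sub
      (a1.sin.div_const ((n:ℝ)^2))
    refine a2.congr_deriv ?_
    rw [show (n:ℝ) * t - n * ε * Real.sin t = n * (t - ε * Real.sin t) by ring]
    field_simp
    ring
  have hF := intervalIntegral.integral_eq_sub_of_hasDerivAt (a := 0) (b := π) (fun t _ => hG t)
    (Continuous.intervalIntegrable (by fun_prop) _ _)
  rw [intervalIntegral.integral_sub (Continuous.intervalIntegrable (by fun_prop) _ _)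
    (Continuous.intervalIntegrable (by fun_prop) _ _)] at hF
  simp only [Real.sin_zero, Real.sin_pi, mul_zero, sub_zero, zero_mul, neg_zero, zero_div,
    Real.sin_nat_mul_pi, intervalIntegral.integral_div] at hF
  rw [sub_eq_zero.mp hF, besselJ]
  have := Real.pi_ne_zero
  field_simp
end

section
/- For every ε ∈ [0,1) and every M ∈ ℝ, the series Σ_{n=1}^∞ (2·J_n(nε)/n)·sin(nM) converges, and its sum equals ψ(M) − M, where ψ(M) is the unique real solution of Kepler's equation M = ψ − ε·sin ψ and J_n(x) = (1/π)·∫_0^π cos(nθ − x·sin θ) dθ. -/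
open Real MeasureTheory intervalIntegral Filter

namespace KeplerAux

/-- the Kepler map -/
noncomputable def g (ε θ : ℝ) : ℝ := θ - ε * Real.sin θ

/-- the exponential of the Kepler map -/
noncomputable def E (ε : ℝ) (n : ℤ) (θ : ℝ) : ℂ := Complex.exp (-(n * Complex.I) * (g ε θ : ℂ))

lemma g_deriv (ε θ : ℝ) : HasDerivAt (g ε) (1 - ε * Real.cos θ) θ :=
  (hasDerivAt_id θ).sub ((Real.hasDerivAt_sin θ).const_mul ε)

lemma g_cont (ε : ℝ) : Continuous (g ε) := by unfold g; fun_prop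

lemma E_cont (ε : ℝ) (n : ℤ) : Continuous (E ε n) := by
  unfold E; have := g_cont ε; fun_prop

lemma E_deriv (ε : ℝ) (n : ℤ) (θ : ℝ) :
    HasDerivAt (E ε n) (E ε n θ * (-(n * Complex.I) * ((1 - ε * Real.cos θ : ℝ) : ℂ))) θ :=
  (((g_deriv ε θ).ofReal_comp).const_mul (-(n * Complex.I))).cexp

lemma g_pi (ε : ℝ) : g ε π = π := by simp [g]
lemma g_neg_pi (ε : ℝ) : g ε (-π) = -π := by simp [g]
lemma g_neg (ε θ : ℝ) : g ε (-θ) = -g ε θ := by simp [g]; ring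

lemma E_pi (ε : ℝ) (n : ℤ) : E ε n π = E ε n (-π) := by
  unfold E
  rw [g_pi, g_neg_pi, Complex.exp_eq_exp_iff_exists_int]
  exact ⟨-n, by push_cast; ring⟩

lemma E_norm (ε : ℝ) (n : ℤ) (θ : ℝ) : ‖E ε n θ‖ = 1 := by
  unfold E
  rw [Complex.norm_exp]; simp

lemma L1 (ε : ℝ) (n : ℤ) (h0 : n ≠ 0) :
    (n * Complex.I) * ∫ θ in (-π)..π, E ε n θ * ((ε * Real.sin θ : ℝ) : ℂ) *
      ((1 - ε * Real.cos θ : ℝ) : ℂ) = ∫ θ in (-π)..π, E ε n θ := by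
  have hc := E_cont ε n
  have hn : (n * Complex.I : ℂ) ≠ 0 := by simp [h0]
  rw [← intervalIntegral.integral_const_mul, eq_comm, ← sub_eq_zero,
    ← intervalIntegral.integral_sub]
  rotate_left
  · exact hc.intervalIntegrable _ _
  · apply Continuous.intervalIntegrable; fun_prop
  rw [intervalIntegral.integral_eq_sub_of_hasDerivAt
    (f := fun θ => E ε n θ * (((ε * Real.sin θ : ℝ) : ℂ) - (n * Complex.I)⁻¹))]
  · simp [E_pi]
  · intro θ _
    have h2 := ((((Real.hasDerivAt_sin θ).const_mul ε).ofReal_comp).sub_const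
      ((n * Complex.I : ℂ)⁻¹))
    refine ((E_deriv ε n θ).mul h2).congr_deriv ?_
    push_cast
    linear_combination (E ε n θ * (1 - ε * Complex.cos θ)) * (mul_inv_cancel₀ hn)
  · apply Continuous.intervalIntegrable; fun_prop

lemma L0 (ε : ℝ) :
    ∫ θ in (-π)..π, E ε 0 θ * ((ε * Real.sin θ : ℝ) : ℂ) *
      ((1 - ε * Real.cos θ : ℝ) : ℂ) = 0 := by
  have h : ∀ θ, E ε 0 θ = 1 := by intro θ; simp [E]
  simp only [h, one_mul, ← Complex.ofReal_mul]
  rw [intervalIntegral.integral_ofReal, intervalIntegral.integral_eq_sub_of_hasDerivAt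
    (f := fun θ => -(ε * Real.cos θ) - ε ^ 2 * Real.sin θ ^ 2 / 2)]
  · simp
  · intro θ _
    convert! (((Real.hasDerivAt_cos θ).const_mul ε).neg).sub
      ((((Real.hasDerivAt_sin θ).pow 2).const_mul (ε ^ 2)).div_const 2) using 1
    simp
    ring
  · apply Continuous.intervalIntegrable; fun_prop

lemma gp_pos {ε : ℝ} (h0 : 0 ≤ ε) (θ : ℝ) : 1 - ε ≤ 1 - ε * Real.cos θ := by
  nlinarith [Real.cos_le_one θ]

lemma L2 {ε : ℝ} (h0 : 0 ≤ ε) (h1 : ε < 1) (n : ℤ) :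
    (n * Complex.I) * ∫ θ in (-π)..π, E ε n θ =
    ∫ θ in (-π)..π, E ε n θ *
      ((-(ε * Real.sin θ) / (1 - ε * Real.cos θ) ^ 2 : ℝ) : ℂ) := by
  have hc := E_cont ε n
  have hp : ∀ θ, (1 - ε * Real.cos θ) ≠ 0 := fun θ => by linarith [gp_pos h0 θ]
  have hc2 : Continuous fun θ : ℝ => -(ε * Real.sin θ) / (1 - ε * Real.cos θ) ^ 2 :=
    Continuous.div (by fun_prop) (by fun_prop) (fun θ => pow_ne_zero _ (hp θ))
  rw [← intervalIntegral.integral_const_mul, eq_comm, ← sub_eq_zero,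
    ← intervalIntegral.integral_sub]
  rotate_left
  · apply Continuous.intervalIntegrable; fun_prop
  · apply Continuous.intervalIntegrable; fun_prop
  rw [intervalIntegral.integral_eq_sub_of_hasDerivAt
    (f := fun θ => E ε n θ * (((1 - ε * Real.cos θ)⁻¹ : ℝ) : ℂ))]
  · simp [E_pi]
  · intro θ _
    have h2 := ((((Real.hasDerivAt_cos θ).const_mul ε).const_sub 1).fun_inv (hp θ)).ofReal_comp
    refine ((E_deriv ε n θ).mul h2).congr_deriv ?_
    have h3 : ((1 - ε * Real.cos θ : ℝ) : ℂ) * (((1 - ε * Real.cos θ)⁻¹ : ℝ) : ℂ) = 1 := by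
      rw [← Complex.ofReal_mul, mul_inv_cancel₀ (hp θ), Complex.ofReal_one]
    have h4 : -(ε * -Real.sin θ) = ε * Real.sin θ := by ring
    rw [h4]
    linear_combination (-E ε n θ * n * Complex.I) * h3
  · apply Continuous.intervalIntegrable; fun_prop

lemma L2b {ε : ℝ} (h0 : 0 ≤ ε) (h1 : ε < 1) (n : ℤ) :
    |(n : ℝ)| * ‖∫ θ in (-π)..π, E ε n θ‖ ≤ 1 / (1 - ε) ^ 2 * (2 * π) := by
  have h : |(n : ℝ)| * ‖∫ θ in (-π)..π, E ε n θ‖ =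
      ‖(n * Complex.I) * ∫ θ in (-π)..π, E ε n θ‖ := by simp
  rw [h, L2 h0 h1]
  refine (intervalIntegral.norm_integral_le_of_norm_le_const
    (C := 1 / (1 - ε) ^ 2) ?_).trans_eq ?_
  · intro θ _
    rw [norm_mul, E_norm, one_mul, Complex.norm_real, norm_div, norm_neg, norm_pow, norm_mul]
    have := gp_pos h0 θ
    have h5 : (1 - ε) ≤ ‖1 - ε * Real.cos θ‖ := this.trans (le_abs_self _)
    have h6 : 0 < 1 - ε := by linarith
    gcongr
    rw [Real.norm_of_nonneg h0]
    have := Real.abs_sin_le_one θ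
    rw [Real.norm_eq_abs]
    nlinarith [abs_nonneg (Real.sin θ)]
  · rw [abs_of_pos (by linarith [Real.pi_pos])]; ring

lemma L3 (ε : ℝ) (n : ℤ) : ∫ θ in (-π)..π, E ε n θ =
    ((2 * ∫ θ in (0:ℝ)..π, Real.cos (n * g ε θ) : ℝ) : ℂ) := by
  have hc := E_cont ε n
  rw [← intervalIntegral.integral_add_adjacent_intervals (b := 0)
    (hc.intervalIntegrable _ _) (hc.intervalIntegrable _ _)]
  have : ∫ θ in (-π)..0, E ε n θ = ∫ θ in (0:ℝ)..π, E ε n (-θ) := by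
    rw [intervalIntegral.integral_comp_neg (fun θ => E ε n θ)]; simp
  rw [this, ← intervalIntegral.integral_add]
  rotate_left
  · apply Continuous.intervalIntegrable; fun_prop
  · apply Continuous.intervalIntegrable; fun_prop
  rw [← intervalIntegral.integral_const_mul, ← intervalIntegral.integral_ofReal]
  congr 1
  ext θ
  unfold E
  rw [g_neg]
  push_cast
  rw [Complex.two_cos]
  congr 2 <;> ring

lemma L3b (ε : ℝ) (n : ℕ) : ∫ θ in (-π)..π, E ε n θ = ((2 * π * besselJ n (n * ε) : ℝ) : ℂ) := by
  rw [L3, besselJ]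
  congr 1
  have : ∀ θ, ((n : ℤ) : ℝ) * g ε θ = n * θ - n * ε * Real.sin θ := by
    intro θ; simp [g]; ring
  simp only [this]
  field_simp

lemma L3c (ε : ℝ) (n : ℤ) : ∫ θ in (-π)..π, E ε (-n) θ = ∫ θ in (-π)..π, E ε n θ := by
  rw [L3, L3]
  simp

lemma psi_lip {ε : ℝ} (h0 : 0 ≤ ε) (a b : ℝ) :
    (1 - ε) * |a - b| ≤ |g ε a - g ε b| := by
  have h := Real.abs_sin_sub_sin_le a b
  have h2 : a - b = (g ε a - g ε b) + ε * (Real.sin a - Real.sin b) := by simp [g]; ring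
  have h3 := abs_add_le (g ε a - g ε b) (ε * (Real.sin a - Real.sin b))
  rw [← h2, abs_mul, abs_of_nonneg h0] at h3
  nlinarith

lemma g_inj {ε : ℝ} (h0 : 0 ≤ ε) (h1 : ε < 1) : Function.Injective (g ε) := by
  intro a b hab
  have := psi_lip h0 a b
  rw [hab, sub_self, abs_zero] at this
  have h : |a - b| ≤ 0 := by nlinarith [abs_nonneg (a - b)]
  exact sub_eq_zero.1 (abs_nonpos_iff.1 h)

lemma psi_cont {ε : ℝ} (h0 : 0 ≤ ε) (h1 : ε < 1) (ψ : ℝ → ℝ) (hψ : ∀ M, g ε (ψ M) = M) :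
    Continuous ψ := by
  refine (LipschitzWith.of_dist_le_mul (K := (⟨(1 - ε)⁻¹, by
    have : 0 < 1 - ε := by linarith
    positivity⟩ : NNReal)) ?_).continuous
  intro a b
  have := psi_lip h0 (ψ a) (ψ b)
  rw [hψ, hψ] at this
  rw [Real.dist_eq, Real.dist_eq]
  change _ ≤ (1 - ε)⁻¹ * _
  rwa [le_inv_mul_iff₀ (by linarith)]

lemma psi_per {ε : ℝ} (h0 : 0 ≤ ε) (h1 : ε < 1) (ψ : ℝ → ℝ) (hψ : ∀ M, g ε (ψ M) = M) :
    Function.Periodic (fun M => ((ψ M - M : ℝ) : ℂ)) (2 * π) := by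
  intro M
  have : ψ (M + 2 * π) = ψ M + 2 * π := by
    apply g_inj h0 h1
    rw [hψ]
    have := hψ M
    simp only [g] at this ⊢
    rw [Real.sin_add_two_pi]
    linarith
  simp only [this]
  congr 1
  ring

instance fact2pi : Fact (0 < 2 * π) := ⟨Real.two_pi_pos⟩

lemma coeff {ε : ℝ} (h0 : 0 ≤ ε) (h1 : ε < 1) (ψ : ℝ → ℝ) (hψ : ∀ M, g ε (ψ M) = M) (n : ℤ) :
    fourierCoeff (psi_per h0 h1 ψ hψ).lift n = (1 / (2 * π) : ℝ) •
      ∫ θ in (-π)..π, E ε n θ * ((ε * Real.sin θ : ℝ) : ℂ) *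
      ((1 - ε * Real.cos θ : ℝ) : ℂ) := by
  have hc := psi_cont h0 h1 ψ hψ
  rw [fourierCoeff_eq_intervalIntegral _ n (-π)]
  congr 1
  rw [show -π + 2 * π = π by ring]
  have key := intervalIntegral.integral_deriv_smul_comp (a := -π) (b := π) (f := g ε)
    (f' := fun θ => 1 - ε * Real.cos θ)
    (g := fun x : ℝ => Complex.exp (-(n * Complex.I) * (x : ℂ)) * ((ψ x - x : ℝ) : ℂ))
    (fun θ _ => g_deriv ε θ) (by fun_prop) (by fun_prop)
  rw [g_pi, g_neg_pi] at key
  trans ∫ x in (-π)..π, Complex.exp (-(n * Complex.I) * (x : ℂ)) * ((ψ x - x : ℝ) : ℂ)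
  · congr 1
    ext x
    rw [fourier_coe_apply, Function.Periodic.lift_coe, smul_eq_mul]
    congr 2
    have : (π : ℂ) ≠ 0 := by exact_mod_cast Real.pi_ne_zero
    push_cast
    field_simp
  · rw [← key]
    congr 1
    ext θ
    have h2 : ψ (g ε θ) = θ := g_inj h0 h1 (hψ _)
    simp only [Function.comp, h2]
    rw [Complex.real_smul, E, mul_comm]
    congr 4
    simp [g]

lemma coeff_ne {ε : ℝ} (h0 : 0 ≤ ε) (h1 : ε < 1) (ψ : ℝ → ℝ) (hψ : ∀ M, g ε (ψ M) = M) (n : ℤ)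
    (hn : n ≠ 0) :
    fourierCoeff (psi_per h0 h1 ψ hψ).lift n =
      (1 / (2 * π) : ℝ) * ((n * Complex.I)⁻¹ * ∫ θ in (-π)..π, E ε n θ) := by
  have hn' : (n * Complex.I : ℂ) ≠ 0 := by simp [hn]
  rw [coeff h0 h1 ψ hψ, ← L1 ε n hn, inv_mul_cancel_left₀ hn', Complex.real_smul]

lemma coeff_zero {ε : ℝ} (h0 : 0 ≤ ε) (h1 : ε < 1) (ψ : ℝ → ℝ) (hψ : ∀ M, g ε (ψ M) = M) :
    fourierCoeff (psi_per h0 h1 ψ hψ).lift 0 = 0 := by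
  rw [coeff h0 h1 ψ hψ, L0, smul_zero]

lemma coeff_summable {ε : ℝ} (h0 : 0 ≤ ε) (h1 : ε < 1) (ψ : ℝ → ℝ)
    (hψ : ∀ M, g ε (ψ M) = M) :
    Summable (fourierCoeff (psi_per h0 h1 ψ hψ).lift) := by
  have hs : Summable fun n : ℤ => 1 / (1 - ε) ^ 2 * (1 / (n : ℝ) ^ 2) :=
    (Real.summable_one_div_int_pow.2 (by norm_num)).mul_left _
  refine Summable.of_norm_bounded hs ?_
  intro n
  rcases eq_or_ne n 0 with rfl | hn
  · rw [coeff_zero h0 h1 ψ hψ]; simp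
  rw [coeff_ne h0 h1 ψ hψ _ hn]
  have hb := L2b h0 h1 n
  have hn' : 0 < |(n : ℝ)| := by simpa using hn
  have hpi := Real.pi_pos
  rw [norm_mul, norm_mul, norm_inv, norm_mul, Complex.norm_I, mul_one, Complex.norm_real,
    Complex.norm_intCast, Real.norm_of_nonneg (by positivity)]
  rw [← sq_abs (n : ℝ)]
  calc _ = (|(n : ℝ)| * ‖∫ θ in (-π)..π, E ε n θ‖) * (1 / (2 * π) * (1 / |(n : ℝ)| ^ 2)) := by
        field_simp
    _ ≤ (1 / (1 - ε) ^ 2 * (2 * π)) * (1 / (2 * π) * (1 / |(n : ℝ)| ^ 2)) := by gcongr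
    _ = _ := by
      have : 1 - ε ≠ 0 := by linarith
      field_simp

lemma main_sum {ε : ℝ} (h0 : 0 ≤ ε) (h1 : ε < 1) (ψ : ℝ → ℝ) (hψ : ∀ M, g ε (ψ M) = M) (M : ℝ) :
    HasSum (fun n : ℤ => fourierCoeff (psi_per h0 h1 ψ hψ).lift n *
      Complex.exp (n * Complex.I * M)) ((ψ M - M : ℝ) : ℂ) := by
  have hc := psi_cont h0 h1 ψ hψ
  let F : C(AddCircle (2 * π), ℂ) := ⟨(psi_per h0 h1 ψ hψ).lift,
    continuous_coinduced_dom.mpr (by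
      change Continuous (fun M => ((ψ M - M : ℝ) : ℂ))
      fun_prop)⟩
  have := has_pointwise_sum_fourier_series_of_summable (f := F)
    (coeff_summable h0 h1 ψ hψ) (M : AddCircle (2 * π))
  change HasSum _ ((ψ M - M : ℝ) : ℂ) at this
  refine Eq.subst (motive := fun f => HasSum f _) (funext fun n => ?_) this
  symm
  rw [fourier_coe_apply, smul_eq_mul]
  congr 2
  have : (π : ℂ) ≠ 0 := by exact_mod_cast Real.pi_ne_zero
  push_cast
  field_simp

end KeplerAux

open KeplerAux in
/-- For every `ε ∈ [0,1)` and every `M ∈ ℝ`, the series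
`Σ_{n=1}^∞ (2 J_n(nε)/n) sin(nM)` converges and its sum is `ψ(M) - M`,
where `ψ(M)` is the unique real solution of Kepler's equation `M = ψ - ε sin ψ`. -/
theorem kepler_bessel_series (ε : ℝ) (hε : ε ∈ Set.Ico (0:ℝ) 1)
    (ψ : ℝ → ℝ) (hψ : ∀ M : ℝ, M = ψ M - ε * Real.sin (ψ M)) (M : ℝ) :
    Tendsto (fun N : ℕ => ∑ n ∈ Finset.range N,
        (2 * besselJ (n + 1) ((n + 1) * ε) / (n + 1)) * Real.sin ((n + 1) * M))
      atTop (nhds (ψ M - M)) := by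
  obtain ⟨h0, h1⟩ := hε
  have hψ' : ∀ M, g ε (ψ M) = M := fun M => (hψ M).symm
  have h := (main_sum h0 h1 ψ hψ' M).nat_add_neg
  rw [← hasSum_nat_add_iff' 1] at h
  simp only [Finset.range_one, Finset.sum_singleton, Nat.cast_zero, neg_zero, Int.cast_zero,
    coeff_zero h0 h1 ψ hψ', zero_mul, add_zero, sub_zero] at h
  refine HasSum.tendsto_sum_nat ?_
  rw [← Complex.hasSum_ofReal]
  refine Eq.subst (motive := fun f => HasSum f _) (funext fun n => ?_) h
  symm
  have hne : ((n + 1 : ℕ) : ℤ) ≠ 0 := by positivity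
  have hne' : (n : ℂ) + 1 ≠ 0 := by exact_mod_cast hne
  rw [coeff_ne h0 h1 ψ hψ' _ hne, coeff_ne h0 h1 ψ hψ' _ (neg_ne_zero.2 hne), L3c, L3b]
  have : (π : ℂ) ≠ 0 := by exact_mod_cast Real.pi_ne_zero
  push_cast
  have hs := Complex.two_sin (((n : ℂ) + 1) * M)
  rw [show ((n : ℂ) + 1) * Complex.I * M = ((n : ℂ) + 1) * M * Complex.I by ring,
    show -((n : ℂ) + 1) * Complex.I * M = -(((n : ℂ) + 1) * M) * Complex.I by ring]
  have hs' : Complex.sin (((n : ℂ) + 1) * M) =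
    (Complex.exp (-(((n : ℂ) + 1) * M) * Complex.I)
      - Complex.exp (((n : ℂ) + 1) * M * Complex.I)) * Complex.I / 2 := by
    rw [← hs]; ring
  rw [hs']
  have hI := Complex.I_sq
  field_simp
  rw [hI]
  ring
end

section
/- For every ε ∈ [0,1) and every M ∈ ℝ, the complex Kapteyn series Σ_{n=1}^∞ (2·J_n(nε)/n)·exp(i·n·M) converges in ℂ (i.e., its sequence of partial sums converges), where J_n(x) = (1/π)·∫_0^π cos(nθ − x·sin θ) dθ. -/
open Real MeasureTheory intervalIntegral Filter Complex

lemma besselJ_bound_s3 (ε : ℝ) (h0 : 0 ≤ ε) (h1 : ε < 1) (n : ℕ) (hn : 0 < n) :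
    |besselJ n (n * ε)| ≤ 1 / ((1 - ε) ^ 2) / n := by
  have hn' : (0:ℝ) < n := by exact_mod_cast hn
  have hd : 0 < 1 - ε := by linarith
  have hpos : ∀ θ : ℝ, 1 - ε ≤ 1 - ε * Real.cos θ := fun θ => by
    nlinarith [Real.cos_le_one θ]
  have hne : ∀ θ : ℝ, (1 - ε * Real.cos θ) ≠ 0 := fun θ => (lt_of_lt_of_le hd (hpos θ)).ne'
  set g : ℝ → ℝ := fun θ => Real.sin (n * θ - n * ε * Real.sin θ) * (ε * Real.sin θ) /
    (n * (1 - ε * Real.cos θ) ^ 2) with hg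
  set c : ℝ → ℝ := fun θ => Real.cos (n * θ - n * ε * Real.sin θ) with hc
  have hgc : Continuous g := by
    apply Continuous.div (by fun_prop) (by fun_prop)
    intro θ
    exact mul_ne_zero hn'.ne' (pow_ne_zero _ (hne θ))
  have hcc : Continuous c := by fun_prop
  have hder : ∀ θ : ℝ, HasDerivAt (fun θ : ℝ => Real.sin (n * θ - n * ε * Real.sin θ) /
      (n * (1 - ε * Real.cos θ))) (c θ - g θ) θ := by
    intro θ
    have a1 : HasDerivAt (fun θ : ℝ => (n:ℝ) * θ - n * ε * Real.sin θ)
        ((n:ℝ) * 1 - n * ε * Real.cos θ) θ :=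
      ((hasDerivAt_id θ).const_mul _).sub ((Real.hasDerivAt_sin θ).const_mul _)
    have a2 : HasDerivAt (fun θ : ℝ => (n:ℝ) * (1 - ε * Real.cos θ))
        ((n:ℝ) * (-(ε * -Real.sin θ))) θ :=
      (((Real.hasDerivAt_cos θ).const_mul ε).const_sub 1).const_mul _
    have := a1.sin.div a2 (mul_ne_zero hn'.ne' (hne θ))
    refine this.congr_deriv ?_
    have := hne θ
    simp only [hc, hg]
    field_simp
  have hint := integral_eq_sub_of_hasDerivAt (a := 0) (b := π) (fun θ _ => hder θ)
    ((hcc.sub hgc).intervalIntegrable _ _)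
  rw [integral_sub (hcc.intervalIntegrable _ _) (hgc.intervalIntegrable _ _)] at hint
  simp only [Real.sin_pi, Real.sin_zero, mul_zero, sub_zero, Real.sin_nat_mul_pi, zero_div] at hint
  have hb : ‖∫ θ in (0:ℝ)..π, g θ‖ ≤ (1 / ((1 - ε) ^ 2) / n) * |π - 0| := by
    apply intervalIntegral.norm_integral_le_of_norm_le_const
    intro θ _
    rw [hg, Real.norm_eq_abs, abs_div, abs_mul, abs_mul, abs_of_nonneg h0,
      abs_of_nonneg (a := (n:ℝ) * _) (by positivity), div_div, mul_comm (_ ^ 2) (n:ℝ)]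
    have s1 := Real.abs_sin_le_one (n * θ - n * ε * Real.sin θ)
    have s2 := Real.abs_sin_le_one θ
    have s3 : ε * |Real.sin θ| ≤ 1 := mul_le_one₀ h1.le (abs_nonneg _) s2
    gcongr
    · exact mul_le_one₀ s1 (by positivity) s3
    · linarith [hpos θ]
  have he : ∫ θ in (0:ℝ)..π, c θ = ∫ θ in (0:ℝ)..π, g θ := by linarith
  unfold besselJ
  change |1 / π * ∫ θ in (0:ℝ)..π, c θ| ≤ _
  rw [he, abs_mul, abs_of_pos (a := 1 / π) (by positivity)]
  rw [Real.norm_eq_abs, sub_zero, abs_of_pos Real.pi_pos] at hb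
  rw [one_div_mul_eq_div, div_le_iff₀ Real.pi_pos]
  exact hb

/-- For every `ε ∈ [0,1)` and every `M ∈ ℝ`, the complex Kapteyn series
`Σ_{n=1}^∞ (2 J_n(nε)/n) exp(i n M)` converges in `ℂ`
(its sequence of partial sums converges). -/
theorem kapteyn_series_converges (ε : ℝ) (hε : ε ∈ Set.Ico (0:ℝ) 1) (M : ℝ) :
    ∃ L : ℂ, Tendsto (fun N : ℕ => ∑ n ∈ Finset.range N,
        ((2 * besselJ (n + 1) ((n + 1) * ε) / (n + 1) : ℝ) : ℂ) *
          Complex.exp (Complex.I * (n + 1) * (M : ℂ)))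
      atTop (nhds L) := by
  have hs : Summable (fun n : ℕ => (2 / (1 - ε) ^ 2) * (1 / ((n + 1 : ℕ) : ℝ) ^ 2)) :=
    ((summable_nat_add_iff 1).2 (Real.summable_one_div_nat_pow.2 one_lt_two)).mul_left _
  have hS : Summable (fun n : ℕ => ((2 * besselJ (n + 1) ((n + 1) * ε) / (n + 1) : ℝ) : ℂ) *
          Complex.exp (Complex.I * (n + 1) * (M : ℂ))) := by
    refine Summable.of_norm_bounded hs fun n => ?_
    have hb := besselJ_bound_s3 ε hε.1 hε.2 (n + 1) n.succ_pos
    have he : ‖Complex.exp (Complex.I * (n + 1) * (M : ℂ))‖ = 1 := by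
      rw [Complex.norm_exp]
      simp
    rw [norm_mul, he, mul_one, Complex.norm_real, Real.norm_eq_abs, abs_div, abs_mul]
    push_cast at hb ⊢
    have hp : (0:ℝ) < n + 1 := by positivity
    rw [abs_of_pos hp, abs_two, div_le_iff₀ hp]
    have hd : 0 < 1 - ε := by linarith [hε.2]
    calc 2 * |besselJ (n + 1) ((n + 1) * ε)| ≤ 2 * (1 / (1 - ε) ^ 2 / (n + 1)) := by gcongr
      _ = _ := by field_simp
  exact ⟨_, hS.hasSum.tendsto_sum_nat⟩
end

section
/- For every ε ∈ (0,1), lim_{n→∞} √n · J_n(nε) / ρ(ε)^n = 1/√(2π·√(1−ε²)), where J_n(x) = (1/π)·∫_0^π cos(nθ − x·sin θ) dθ and ρ(ε) = exp(√(1−ε²))·(1 − √(1−ε²))/ε. -/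
open Real MeasureTheory intervalIntegral Filter

/-- `ρ(ε) = exp(√(1-ε²))·(1-√(1-ε²))/ε`. -/
noncomputable def kapteynRho (ε : ℝ) : ℝ :=
  Real.exp (Real.sqrt (1 - ε ^ 2)) * (1 - Real.sqrt (1 - ε ^ 2)) / ε


lemma shift_aux (n : ℕ) (ε α : ℝ) :
    ∫ θ in (0:ℝ)..π, Real.cos (n * θ - (n * ε) * Real.sin θ) =
    ∫ t in (0:ℝ)..π, Real.exp (n * (ε * Real.sinh α * Real.cos t - α)) *
      Real.cos (n * (t - ε * Real.cosh α * Real.sin t)) := by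
  set f : ℂ → ℂ := fun z => Complex.exp (Complex.I * (n * (z - ε * Complex.sin z))) with hf
  have hfd : Differentiable ℂ f := by
    simp only [hf]; fun_prop
  have key : ∀ a b : ℝ, f (a + b * Complex.I) =
      Complex.exp (((n * (ε * Real.sinh b * Real.cos a - b) : ℝ) : ℂ) + 
        ((n * (a - ε * Real.cosh b * Real.sin a) : ℝ) : ℂ) * Complex.I) := by
    intro a b
    simp only [hf]
    congr 1
    rw [Complex.sin_add_mul_I]
    push_cast
    linear_combination (n * b - n * ε * Complex.cos a * Complex.sinh b : ℂ) * Complex.I_sq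
  have hre : ∀ a b : ℝ, (f (a + b * Complex.I)).re = 
      Real.exp (n * (ε * Real.sinh b * Real.cos a - b)) * 
        Real.cos (n * (a - ε * Real.cosh b * Real.sin a)) := by
    intro a b
    rw [key, Complex.exp_re]
    simp only [Complex.add_re, Complex.add_im, Complex.mul_I_re, Complex.mul_I_im,
      Complex.ofReal_re, Complex.ofReal_im]
    rw [neg_zero, add_zero, zero_add]
  have him : ∀ a b : ℝ, (f (a + b * Complex.I)).im = 
      Real.exp (n * (ε * Real.sinh b * Real.cos a - b)) * 
        Real.sin (n * (a - ε * Real.cosh b * Real.sin a)) := by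
    intro a b
    rw [key, Complex.exp_im]
    simp only [Complex.add_re, Complex.add_im, Complex.mul_I_re, Complex.mul_I_im,
      Complex.ofReal_re, Complex.ofReal_im]
    rw [neg_zero, add_zero, zero_add]
  have H := Complex.integral_boundary_rect_eq_zero_of_differentiableOn f 0 (π + α * Complex.I)
    hfd.differentiableOn
  simp only [Complex.zero_re, Complex.zero_im, Complex.add_re, Complex.ofReal_re,
    Complex.mul_I_re, Complex.ofReal_im, neg_zero, add_zero, Complex.add_im,
    Complex.mul_I_im, zero_add] at H
  have hc : Continuous f := hfd.continuous
  have re_int : ∀ (g : ℝ → ℂ) (a b : ℝ), Continuous g →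
      (∫ x in a..b, g x).re = ∫ x in a..b, (g x).re := by
    intro g a b hg
    exact (Complex.reCLM.intervalIntegral_comp_comm (hg.intervalIntegrable a b)).symm
  have im_int : ∀ (g : ℝ → ℂ) (a b : ℝ), Continuous g →
      (∫ x in a..b, g x).im = ∫ x in a..b, (g x).im := by
    intro g a b hg
    exact (Complex.imCLM.intervalIntegral_comp_comm (hg.intervalIntegrable a b)).symm
  have H2 := congrArg Complex.re H
  simp only [Complex.add_re, Complex.sub_re, smul_eq_mul, Complex.I_mul_re, Complex.zero_re] at H2
  rw [re_int _ _ _ (by fun_prop), re_int _ _ _ (by fun_prop), im_int _ _ _ (by fun_prop),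
    im_int _ _ _ (by fun_prop)] at H2
  simp only [hre, him] at H2
  have e1 : ∀ y : ℝ, Real.sin (n * (π - ε * Real.cosh y * Real.sin π)) = 0 := by
    intro y; simp
  simp only [e1] at H2
  simp at H2
  rw [sub_eq_zero] at H2
  rw [← H2]
  congr 1; ext x; congr 1; ring

lemma laplace_aux (s : ℝ) (hs : 0 < s) :
    Tendsto (fun n : ℕ => Real.sqrt n * ∫ t in (0:ℝ)..π, Real.exp (-(n * s * (1 - Real.cos t))) *
      Real.cos (n * (t - Real.sin t))) atTop (nhds (Real.sqrt (π / (s / 2)) / 2)) := by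
  set g : ℕ → ℝ → ℝ := fun n t => Real.exp (-(n * s * (1 - Real.cos t))) *
      Real.cos (n * (t - Real.sin t)) with hg
  have hgc : ∀ n, Continuous (g n) := by intro n; simp only [hg]; fun_prop
  set F : ℕ → ℝ → ℝ := fun n => (Set.Iic (π * √n)).indicator (fun u => g n (u / √n)) with hF
  have h1 : ∀ᶠ n : ℕ in atTop, ∫ u in Set.Ioi (0:ℝ), F n u = √n * ∫ t in (0:ℝ)..π, g n t := by
    filter_upwards [eventually_gt_atTop 0] with n hn
    have hsn : 0 < √(n:ℝ) := by positivity
    have := intervalIntegral.integral_comp_div (a := 0) (b := π * √n) (g n) hsn.ne'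
    rw [zero_div, mul_div_cancel_right₀ _ hsn.ne', smul_eq_mul] at this
    rw [← this, intervalIntegral.integral_of_le (by positivity), hF]
    simp only
    rw [MeasureTheory.setIntegral_indicator measurableSet_Iic, Set.Ioi_inter_Iic]
  rw [← integral_gaussian_Ioi]
  refine Tendsto.congr' h1 ?_
  refine tendsto_integral_of_dominated_convergence
    (fun u => Real.exp (-(2 * s / π ^ 2) * u ^ 2)) ?_ ?_ ?_ ?_
  · intro n
    refine (Measurable.indicator ?_ measurableSet_Iic).aestronglyMeasurable
    exact ((hgc n).comp (by fun_prop)).measurable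
  · exact (integrable_exp_neg_mul_sq (by positivity)).integrableOn
  · intro n
    filter_upwards [ae_restrict_mem measurableSet_Ioi] with u hu
    have hu : 0 < u := hu
    simp only [hF, Set.indicator]
    split_ifs with h
    · have h : u ≤ π * √n := h
      have hsn : 0 < √(n:ℝ) := by
        by_contra hh
        have : √(n:ℝ) = 0 := le_antisymm (not_lt.mp hh) (Real.sqrt_nonneg _)
        rw [this] at h; linarith
      simp only [hg, norm_mul, Real.norm_eq_abs, Real.abs_exp]
      refine (mul_le_of_le_one_right (Real.exp_pos _).le (Real.abs_cos_le_one _)).trans ?_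
      apply Real.exp_le_exp.mpr
      have ht : |u / √n| ≤ π := by
        rw [abs_of_pos (by positivity), div_le_iff₀ hsn]; exact h
      have := Real.cos_le_one_sub_mul_cos_sq ht
      have hn : (n:ℝ) * (u / √n) ^ 2 = u ^ 2 := by
        rw [div_pow, Real.sq_sqrt (Nat.cast_nonneg n)]
        have : (n:ℝ) ≠ 0 := fun h0 => by simp [h0] at hsn
        field_simp
      have h5 : n * s * (2 / π ^ 2 * (u / √n) ^ 2) ≤ n * s * (1 - Real.cos (u / √n)) := by
        apply mul_le_mul_of_nonneg_left _ (by positivity)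
        linarith
      have h6 : n * s * (2 / π ^ 2 * (u / √n) ^ 2) = 2 * s / π ^ 2 * u ^ 2 := by
        rw [← hn]; ring
      linarith
    · simp; positivity
  · filter_upwards [ae_restrict_mem measurableSet_Ioi] with u hu
    have hu : 0 < u := hu
    have hsq : Tendsto (fun n : ℕ => √(n:ℝ)) atTop atTop :=
      Real.tendsto_sqrt_atTop.comp tendsto_natCast_atTop_atTop
    have ht0 : Tendsto (fun n : ℕ => u / √(n:ℝ)) atTop (nhds 0) := hsq.const_div_atTop u
    have hnt : ∀ n : ℕ, 0 < n → (n:ℝ) * (u / √n) ^ 2 = u ^ 2 := by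
      intro n hn
      rw [div_pow, Real.sq_sqrt (Nat.cast_nonneg n)]
      field_simp
    have hcos : Tendsto (fun n : ℕ => (n:ℝ) * (1 - Real.cos (u / √n))) atTop (nhds (u ^ 2 / 2)) := by
      have h2 : Tendsto (fun n : ℕ => u ^ 2 / 2 * Real.sinc (u / √n / 2) ^ 2) atTop
          (nhds (u ^ 2 / 2 * Real.sinc (0 / 2) ^ 2)) :=
        ((Real.continuous_sinc.tendsto _).comp (ht0.div_const 2)).pow 2 |>.const_mul _
      simp only [zero_div, Real.sinc_zero, one_pow, mul_one] at h2
      refine h2.congr' ?_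
      filter_upwards [eventually_gt_atTop 0] with n hn
      have hsn : 0 < √(n:ℝ) := by positivity
      have hx : u / √n / 2 ≠ 0 := by positivity
      rw [Real.sinc_of_ne_zero hx, ← hnt n hn]
      have : Real.cos (u / √n) = 1 - 2 * Real.sin (u / √n / 2) ^ 2 := by
        rw [Real.sin_sq, ← mul_div_cancel₀ (u / √n) (two_ne_zero), Real.cos_two_mul]; ring_nf
      rw [this]
      have hx' : u / √n ≠ 0 := by positivity
      generalize u / √n = x at *
      field_simp
      ring
    have hsin : Tendsto (fun n : ℕ => (n:ℝ) * (u / √n - Real.sin (u / √n))) atTop (nhds 0) := by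
      have h3 : Tendsto (fun n : ℕ => u ^ 2 / 4 * (u / √n)) atTop (nhds 0) := by
        simpa using ht0.const_mul (u ^ 2 / 4)
      refine squeeze_zero' ?_ ?_ h3
      · filter_upwards with n
        have := Real.sin_le (x := u / √n) (by positivity)
        have : 0 ≤ u / √n - Real.sin (u / √n) := by linarith
        positivity
      · filter_upwards [eventually_gt_atTop 0, ht0.eventually_lt_const one_pos] with n hn h1
        have hx' : 0 < u / √n := by positivity
        have := Real.sin_gt_sub_cube hx'
        rw [← hnt n hn]
        have hn' : (0:ℝ) < n := by positivity
        have h7 : u / √n - Real.sin (u / √n) ≤ (u / √n) ^ 3 / 4 := by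
          have : 0 < (u / √n) ^ 3 := by positivity
          linarith
        calc _ ≤ (n:ℝ) * ((u / √n) ^ 3 / 4) := mul_le_mul_of_nonneg_left h7 hn'.le
          _ = _ := by ring
    have hlim : Tendsto (fun n : ℕ => g n (u / √n)) atTop (nhds (Real.exp (-(s / 2) * u ^ 2))) := by
      have a := (Real.continuous_exp.tendsto _).comp ((hcos.const_mul s).neg)
      have b := (Real.continuous_cos.tendsto _).comp hsin
      have c := a.mul b
      rw [Real.cos_zero, mul_one] at c
      convert c using 2
      · simp only [hg, Function.comp]; ring_nf
      · ring_nf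
    refine hlim.congr' ?_
    filter_upwards [hsq.eventually_ge_atTop (u / π)] with n hn
    have : u ∈ Set.Iic (π * √n) := by
      rw [Set.mem_Iic, mul_comm]; exact (div_le_iff₀ pi_pos).mp hn
    simp only [hF, Set.indicator_of_mem this]

theorem besselJ_debye_asymptotics (ε : ℝ) (hε : ε ∈ Set.Ioo (0:ℝ) 1) :
    Tendsto (fun n : ℕ => Real.sqrt n * besselJ n (n * ε) / kapteynRho ε ^ n)
      atTop (nhds (1 / Real.sqrt (2 * π * Real.sqrt (1 - ε ^ 2)))) := by
  obtain ⟨h0, h1⟩ := hε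
  have hpos : 0 < 1 - ε ^ 2 := by nlinarith
  unfold kapteynRho besselJ
  have hs2 : √(1 - ε ^ 2) ^ 2 = 1 - ε ^ 2 := Real.sq_sqrt hpos.le
  have hs : 0 < √(1 - ε ^ 2) := Real.sqrt_pos.mpr hpos
  generalize √(1 - ε ^ 2) = s at *
  have hs1 : 0 < 1 - s := by nlinarith
  have hinv : ((1 + s) / ε)⁻¹ = (1 - s) / ε := by
    rw [inv_div, div_eq_div_iff (by positivity) h0.ne']; nlinarith
  have hp : 0 < (1 + s) / ε := by positivity
  set α := Real.log ((1 + s) / ε) with hα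
  have hch : ε * Real.cosh α = 1 := by
    rw [hα, Real.cosh_log hp, hinv]; field_simp; ring
  have hsh : ε * Real.sinh α = s := by
    rw [hα, Real.sinh_log hp, hinv]; field_simp; ring
  have hρ : Real.exp s * (1 - s) / ε = Real.exp (s - α) := by
    rw [Real.exp_sub, hα, Real.exp_log hp, div_eq_mul_inv _ ((1 + s) / ε), hinv]; ring
  rw [hρ]
  have hL := (laplace_aux s hs).const_mul (1 / π)
  have hlim : 1 / π * (√(π / (s / 2)) / 2) = 1 / √(2 * π * s) := by
    have e : π / (s / 2) = (2 * π) ^ 2 / (2 * π * s) := by field_simp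
    rw [e, Real.sqrt_div (by positivity), Real.sqrt_sq (by positivity)]
    field_simp
  rw [hlim] at hL
  refine hL.congr fun n => ?_
  rw [shift_aux n ε α]
  simp only [hch, hsh, one_mul]
  have : ∀ t : ℝ, Real.exp (n * (s * Real.cos t - α)) * Real.cos (n * (t - Real.sin t)) =
      Real.exp (s - α) ^ n * (Real.exp (-(n * s * (1 - Real.cos t))) *
      Real.cos (n * (t - Real.sin t))) := by
    intro t
    rw [← Real.exp_nat_mul, ← mul_assoc, ← Real.exp_add]; ring_nf
  simp only [this, intervalIntegral.integral_const_mul]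
  have hne : Real.exp (s - α) ^ n ≠ 0 := by positivity
  field_simp
end

section
/- For every ε ∈ (0,1) there exists a constant C > 0 such that for all integers n ≥ 1, |J_n(nε)| ≤ C·ρ(ε)^n/√n, where J_n(x) = (1/π)·∫_0^π cos(nθ − x·sin θ) dθ and ρ(ε) = exp(√(1−ε²))·(1 − √(1−ε²))/ε. -/
open Real MeasureTheory intervalIntegral

noncomputable def bF (n : ℕ) (x : ℝ) (z : ℂ) : ℂ :=
  Complex.exp ((x / 2 : ℝ) * (z - z⁻¹)) * (z ^ n)⁻¹

lemma bF_diff (n : ℕ) (x : ℝ) (z : ℂ) (hz : z ≠ 0) : DifferentiableAt ℂ (bF n x) z := by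
  unfold bF
  have h1 : DifferentiableAt ℂ (fun z : ℂ => z⁻¹) z := differentiableAt_inv hz
  have h2 : DifferentiableAt ℂ (fun z : ℂ => (z ^ n)⁻¹) z :=
    (differentiableAt_id.pow n).inv (pow_ne_zero n hz)
  have h3 : DifferentiableAt ℂ (fun z : ℂ => Complex.exp ((x / 2 : ℝ) * (z - z⁻¹))) z :=
    ((differentiableAt_id.sub h1).const_mul _).cexp
  exact h3.mul h2

lemma circ (f : ℂ → ℂ) (r : ℝ) (hr : 0 < r) :
    (∮ z in C(0, r), (z - 0)⁻¹ • f z) = Complex.I * ∫ θ in (0:ℝ)..2 * π, f (circleMap 0 r θ) := by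
  rw [circleIntegral, ← intervalIntegral.integral_const_mul]
  congr 1
  ext θ
  have : circleMap 0 r θ ≠ 0 := circleMap_ne_center hr.ne'
  simp only [deriv_circleMap, sub_zero, smul_eq_mul]
  field_simp

lemma shift (n : ℕ) (x r : ℝ) (hr : 1 ≤ r) :
    (∫ θ in (0:ℝ)..2 * π, bF n x (circleMap 0 r θ)) =
      ∫ θ in (0:ℝ)..2 * π, bF n x (circleMap 0 1 θ) := by
  have key := Complex.circleIntegral_sub_center_inv_smul_eq_of_differentiable_on_annulus_off_countable
    (c := 0) (f := bF n x) (s := ∅) (zero_lt_one) hr Set.countable_empty ?_ ?_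
  · rw [circ _ _ (by linarith), circ _ _ one_pos] at key
    exact mul_left_cancel₀ Complex.I_ne_zero key
  · intro z hz
    refine (bF_diff n x z ?_).continuousAt.continuousWithinAt
    rintro rfl
    simp at hz
  · intro z hz
    refine bF_diff n x z ?_
    rintro rfl
    simp at hz

lemma circ_inv (r θ : ℝ) :
    (circleMap 0 r θ)⁻¹ = circleMap 0 r⁻¹ (-θ) := by
  simp [circleMap, Complex.exp_neg, mul_comm]

lemma circ_re (r θ : ℝ) : (circleMap 0 r θ).re = r * cos θ := by
  simp [circleMap, Complex.exp_ofReal_mul_I_re]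

lemma circ_im (r θ : ℝ) : (circleMap 0 r θ).im = r * sin θ := by
  simp [circleMap, Complex.exp_ofReal_mul_I_im]

lemma bF_norm (n : ℕ) (x r θ : ℝ) (hr : 0 < r) :
    ‖bF n x (circleMap 0 r θ)‖ = exp (x / 2 * ((r - r⁻¹) * cos θ)) * (r⁻¹) ^ n := by
  unfold bF
  rw [norm_mul, Complex.norm_exp, norm_inv, norm_pow, norm_circleMap_zero, abs_of_pos hr, inv_pow,
    Complex.re_ofReal_mul, Complex.sub_re, circ_inv, circ_re, circ_re, cos_neg]
  ring_nf

lemma bF_one (n : ℕ) (x θ : ℝ) :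
    (bF n x (circleMap 0 1 θ)).re = cos (n * θ - x * sin θ) := by
  have h : bF n x (circleMap 0 1 θ) = Complex.exp ((-(n * θ - x * sin θ) : ℝ) * Complex.I) := by
    unfold bF
    have h1 : circleMap 0 1 θ - (circleMap 0 1 θ)⁻¹ = (2 * sin θ : ℝ) * Complex.I := by
      apply Complex.ext
      · rw [Complex.sub_re, circ_inv, circ_re, circ_re]; simp
      · rw [Complex.sub_im, circ_inv, circ_im, circ_im, Complex.im_ofReal_mul, Complex.I_im, sin_neg]; ring
    have h2 : ((circleMap 0 1 θ) ^ n)⁻¹ = Complex.exp (-(n * (θ * Complex.I))) := by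
      rw [Complex.exp_neg, Complex.exp_nat_mul]; simp [circleMap]
    rw [h1, h2, ← Complex.exp_add]
    congr 1
    push_cast
    ring
  rw [h, Complex.exp_ofReal_mul_I_re, cos_neg]

lemma bF_cont (n : ℕ) (x r : ℝ) (hr : 0 < r) :
    Continuous (fun θ => bF n x (circleMap 0 r θ)) := by
  rw [continuous_iff_continuousAt]
  intro θ
  exact ContinuousAt.comp (f := circleMap 0 r)
    (bF_diff n x _ (circleMap_ne_center hr.ne')).continuousAt
    (continuous_circleMap 0 r).continuousAt

lemma bes (n : ℕ) (x : ℝ) :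
    2 * (∫ θ in (0:ℝ)..π, cos (n * θ - x * sin θ)) =
      (∫ θ in (0:ℝ)..2 * π, bF n x (circleMap 0 1 θ)).re := by
  have hi : IntervalIntegrable (fun θ => bF n x (circleMap 0 1 θ)) volume 0 (2 * π) :=
    (bF_cont n x 1 one_pos).intervalIntegrable _ _
  have h1 : (∫ θ in (0:ℝ)..2 * π, bF n x (circleMap 0 1 θ)).re
      = ∫ θ in (0:ℝ)..2 * π, cos (n * θ - x * sin θ) := by
    have := Complex.reCLM.intervalIntegral_comp_comm hi
    simp only [Complex.reCLM_apply, bF_one] at this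
    exact this.symm
  have hc : Continuous (fun θ : ℝ => cos (n * θ - x * sin θ)) := by fun_prop
  have h2 : (∫ θ in (0:ℝ)..π, cos (n * θ - x * sin θ)) =
      ∫ θ in π..2 * π, cos (n * θ - x * sin θ) := by
    have := intervalIntegral.integral_comp_sub_left (a := 0) (b := π)
      (fun θ : ℝ => cos (n * θ - x * sin θ)) (2 * π)
    rw [show 2 * π - π = π by ring, sub_zero] at this
    rw [← this]
    congr 1
    ext θ
    rw [sin_two_pi_sub, show (n:ℝ) * (2 * π - θ) - x * -sin θ = n * (2 * π) - (n * θ - x * sin θ) by ring,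
      cos_nat_mul_two_pi_sub]
  rw [h1, ← intervalIntegral.integral_add_adjacent_intervals (hc.intervalIntegrable 0 π)
    (hc.intervalIntegrable π (2 * π)), ← h2]
  ring

lemma gauss (b : ℝ) (hb : 0 < b) :
    (∫ θ in (0:ℝ)..2 * π, exp (-b * (1 - cos θ))) ≤ √(π / (b * (2 / π ^ 2))) := by
  have hp : Function.Periodic (fun θ => exp (-b * (1 - cos θ))) (2 * π) := by
    intro θ; simp
  have h := hp.intervalIntegral_add_eq 0 (-π)
  rw [zero_add, show -π + 2 * π = π by ring] at h
  have hb' : 0 < b * (2 / π ^ 2) := by positivity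
  rw [h, ← integral_gaussian]
  have hpi := pi_pos
  calc _ ≤ ∫ θ in (-π)..π, exp (-(b * (2 / π ^ 2)) * θ ^ 2) := by
        apply intervalIntegral.integral_mono_on (by linarith)
        · exact Continuous.intervalIntegrable (by fun_prop) _ _
        · exact Continuous.intervalIntegrable (by fun_prop) _ _
        · intro θ hθ
          apply exp_le_exp.2
          have := Real.cos_le_one_sub_mul_cos_sq (x := θ) (abs_le.2 hθ)
          nlinarith
    _ ≤ _ := by
        rw [intervalIntegral.integral_of_le (by linarith)]
        exact setIntegral_le_integral (integrable_exp_neg_mul_sq hb')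
          (Filter.Eventually.of_forall fun _ => (exp_pos _).le)

/-- For every `ε ∈ (0,1)` there is a constant `C > 0` with
`|J_n(nε)| ≤ C ρ(ε)^n / √n` for all `n ≥ 1`. -/
theorem besselJ_bound (ε : ℝ) (hε : ε ∈ Set.Ioo (0:ℝ) 1) :
    ∃ C : ℝ, 0 < C ∧ ∀ n : ℕ, 1 ≤ n →
      |besselJ n (n * ε)| ≤ C * kapteynRho ε ^ n / Real.sqrt n := by
  obtain ⟨h0, h1⟩ := hε
  have hpos : 0 < 1 - ε ^ 2 := by nlinarith
  have hpi := pi_pos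
  unfold kapteynRho besselJ
  set s := √(1 - ε ^ 2) with hs
  have hs0 : 0 < s := Real.sqrt_pos.2 hpos
  have hs2 : s ^ 2 = 1 - ε ^ 2 := Real.sq_sqrt hpos.le
  refine ⟨1 / (2 * π) * √(π / (s * (2 / π ^ 2))), by positivity, fun n hn => ?_⟩
  have hn0 : (0:ℝ) < n := by exact_mod_cast hn
  set r := (1 + s) / ε with hr
  have hr1 : 1 ≤ r := by rw [hr, le_div_iff₀ h0]; linarith
  have hrinv : r⁻¹ = (1 - s) / ε := by
    rw [hr, inv_div, div_eq_div_iff (by positivity) h0.ne']; nlinarith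
  have hnorm : ∀ θ, ‖bF n (n * ε) (circleMap 0 r θ)‖ =
      (exp s * (1 - s) / ε) ^ n * exp (-(n * s) * (1 - cos θ)) := by
    intro θ
    rw [bF_norm _ _ _ _ (by linarith), hrinv, mul_div_assoc (exp s), mul_pow, ← exp_nat_mul,
      mul_right_comm, ← exp_add]
    congr 2
    rw [hr]
    field_simp
    ring
  have hb := bes n (n * ε)
  rw [← shift n _ r hr1] at hb
  have hle : |2 * (∫ θ in (0:ℝ)..π, cos (n * θ - n * ε * sin θ))| ≤
      (exp s * (1 - s) / ε) ^ n * √(π / (n * s * (2 / π ^ 2))) := by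
    rw [hb]
    refine (Complex.abs_re_le_norm _).trans ?_
    refine (intervalIntegral.norm_integral_le_integral_norm (by linarith)).trans ?_
    simp only [hnorm]
    rw [intervalIntegral.integral_const_mul]
    refine mul_le_mul_of_nonneg_left (gauss _ (by positivity)) ?_
    rw [mul_div_assoc, ← hrinv]
    positivity
  have hsq : √(π / (n * s * (2 / π ^ 2))) = √(π / (s * (2 / π ^ 2))) / √n := by
    rw [← Real.sqrt_div (by positivity)]
    congr 1
    field_simp
  rw [hsq, abs_mul, abs_of_pos two_pos] at hle
  rw [abs_mul, abs_of_pos (by positivity : 0 < 1 / π)]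
  calc _ = 1 / (2 * π) * (2 * |∫ θ in (0:ℝ)..π, cos (n * θ - n * ε * sin θ)|) := by field_simp
    _ ≤ 1 / (2 * π) * _ := mul_le_mul_of_nonneg_left hle (by positivity)
    _ = _ := by ring
end

section
/- For every ε ∈ (0,1), the quantity ρ(ε) = exp(√(1−ε²))·(1 − √(1−ε²))/ε satisfies 0 < ρ(ε) < 1. -/
open Real

/-- For every `ε ∈ (0,1)`, the quantity `ρ(ε)` satisfies `0 < ρ(ε) < 1`. -/
theorem kapteynRho_mem_Ioo (ε : ℝ) (hε : ε ∈ Set.Ioo (0:ℝ) 1) :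
    0 < kapteynRho ε ∧ kapteynRho ε < 1 := by
  obtain ⟨h0, h1⟩ := hε
  unfold kapteynRho
  have hpos : 0 < 1 - ε ^ 2 := by nlinarith
  have hs0 : 0 < Real.sqrt (1 - ε ^ 2) := Real.sqrt_pos.mpr hpos
  have hsq : Real.sqrt (1 - ε ^ 2) ^ 2 = 1 - ε ^ 2 := Real.sq_sqrt hpos.le
  generalize Real.sqrt (1 - ε ^ 2) = s at hs0 hsq
  have hs1 : s < 1 := by nlinarith
  have h1s : 0 < 1 - s := by linarith
  refine ⟨by positivity, ?_⟩
  rw [div_lt_one h0]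
  have hl := Real.sum_range_le_log_div hs0.le hs1 2
  norm_num [Finset.sum_range_succ] at hl
  have h3 : 0 < s ^ 3 := by positivity
  have hlog : 2 * s < Real.log ((1 + s) / (1 - s)) := by linarith
  rw [Real.lt_log_iff_exp_lt (by positivity), lt_div_iff₀ h1s] at hlog
  have he : Real.exp (2 * s) = Real.exp s ^ 2 := by
    rw [← Real.exp_nat_mul]; norm_num
  rw [he] at hlog
  refine lt_of_pow_lt_pow_left₀ 2 h0.le ?_
  have h4 := mul_lt_mul_of_pos_right hlog h1s
  nlinarith
end
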